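/- arXiv:1405.5299 — 2 statements merged into one kernel-verified Lean document; each statement's English description precedes it below -/
import Mathlib

section
/- Let T be an R-linear triangulated category, C a full subcategory, and r ∈ R. Then T_r * C ⊆ C * T_{r²}, where T_s denotes the full subcategory of objects annihilated by s, and * is the extension operation on subcategories. (Here C is assumed closed under isomorphisms and direct summands as needed.) -/
open CategoryTheory Limits Pretriangulated

universe v u

variable (C : Type u) [Category.{v} C] [Preadditive C] [HasZeroObject C]
  [HasShift C ℤ] [∀ n : ℤ, (shiftFunctor C n).Additive] [Pretriangulated C]

/-- `starOp C S T` is the class of objects `E` fitting into a distinguished triangle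
`A ⟶ E ⟶ B ⟶ A⟦1⟧` with `A ∈ S` and `B ∈ T`. -/
def starOp (S T : Set C) : Set C :=
  {E | ∃ (A B : C) (f : A ⟶ E) (g : E ⟶ B) (h : B ⟶ A⟦(1 : ℤ)⟧),
    A ∈ S ∧ B ∈ T ∧ Triangle.mk f g h ∈ distTriang C}

variable [HasBinaryBiproducts C]

/-- Closure of a class of objects under finite direct sums, retracts and shifts. -/
inductive AddClosure (S : Set C) : C → Prop
  | of (X : C) : X ∈ S → AddClosure S X
  | zero (X : C) : IsZero X → AddClosure S X
  | shift (X : C) (k : ℤ) : AddClosure S X → AddClosure S (X⟦k⟧)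
  | sum (X Y : C) : AddClosure S X → AddClosure S Y → AddClosure S (X ⊞ Y)
  | retract (X Y : C) (i : X ⟶ Y) (p : Y ⟶ X) :
      i ≫ p = 𝟙 X → AddClosure S Y → AddClosure S X

/-- `pow C S n` is the `n`-fold diamond `S ⋄ ⋯ ⋄ S`, where `S ⋄ T = add (S * T)`. -/
def pow (S : Set C) : ℕ → Set C
  | 0 => {X | IsZero X}
  | n + 1 => {X | AddClosure C (starOp C S (pow S n)) X}

/-- A morphism `f` is a `P`-ghost if every composite `Q⟦k⟧ ⟶ X ⟶ Y` with `Q ∈ P` vanishes. -/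
def IsGhost (P : Set C) {X Y : C} (f : X ⟶ Y) : Prop :=
  ∀ Q ∈ P, ∀ (k : ℤ) (g : Q⟦k⟧ ⟶ X), g ≫ f = 0

/-- `GhostPow C P n f` : `f` is an `n`-fold composite of `P`-ghosts. -/
inductive GhostPow (P : Set C) : ℕ → ∀ {X Y : C}, (X ⟶ Y) → Prop
  | zero {X Y : C} (f : X ⟶ Y) : GhostPow P 0 f
  | comp {n : ℕ} {X Y Z : C} (f : X ⟶ Y) (g : Y ⟶ Z) :
      IsGhost C P f → GhostPow P n g → GhostPow P (n + 1) (f ≫ g)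

/-- The objects whose identity is annihilated by the scalar `r`. -/
def Tkill (R : Type*) [CommRing R] [Linear R C] (r : R) : Set C := {X | r • (𝟙 X) = 0}

/-- in an `R`-linear triangulated category, `T_r * C ⊆ C * T_{r²}`
for any isomorphism-closed full subcategory `C`. -/
theorem Tkill_star_subset [IsTriangulated C] (R : Type*) [CommRing R] [Linear R C]
    [∀ n : ℤ, Functor.Linear R (shiftFunctor C n)]
    (S : Set C) (hS : ∀ ⦃X Y : C⦄, (X ≅ Y) → X ∈ S → Y ∈ S) (r : R) :
    starOp C (Tkill C R r) S ⊆ starOp C S (Tkill C R (r * r)) := by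
  rintro E ⟨A, B, f, g, h, hA, hB, hT⟩
  have hA : r • 𝟙 A = 0 := hA
  have hA1 : r • 𝟙 (A⟦(1 : ℤ)⟧) = 0 := by
    have := congrArg (fun φ => (shiftFunctor C (1 : ℤ)).map φ) hA
    simpa [Functor.map_smul] using this
  -- maps into `A⟦1⟧` are killed by `r`
  have killA1 : ∀ {X : C} (φ : X ⟶ A⟦(1 : ℤ)⟧), r • φ = 0 := by
    intro X φ
    rw [← Category.comp_id φ, ← Linear.comp_smul, hA1, comp_zero]
  have hA2 : r • 𝟙 ((A⟦(1 : ℤ)⟧)⟦(-1 : ℤ)⟧) = 0 := by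
    have := congrArg (fun φ => (shiftFunctor C (-1 : ℤ)).map φ) hA1
    simpa [Functor.map_smul] using this
  -- lift `r` along `g`
  obtain ⟨s, hs⟩ : ∃ s : B ⟶ E, r • 𝟙 B = s ≫ g := Triangle.coyoneda_exact₃ _ hT (r • 𝟙 B) (by
    change (r • 𝟙 B) ≫ h = 0
    simpa using killA1 h)
  obtain ⟨D, p, q, hD⟩ := distinguished_cocone_triangle s
  obtain ⟨K, a, b, hK⟩ := distinguished_cocone_triangle (r • 𝟙 B)
  have oct := Triangulated.someOctahedron hs.symm hD (rot_of_distTriang _ hT) hK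
  obtain ⟨i, j, c1, c2, c3, c4, hO⟩ := oct
  change K ⟶ A⟦(1 : ℤ)⟧ at j
  -- `q` is killed by `r`
  have hq : r • q = 0 := by
    have h1 : q ≫ s⟦(1 : ℤ)⟧' = 0 := comp_distTriang_mor_zero₃₁ _ hD
    have h2 : q ≫ (r • 𝟙 B)⟦(1 : ℤ)⟧' = 0 := by
      rw [hs, Functor.map_comp, ← Category.assoc, h1, zero_comp]
    simpa [Functor.map_smul] using h2
  have ha : r • a = 0 := by
    have h1 : (r • 𝟙 B) ≫ a = 0 := comp_distTriang_mor_zero₁₂ _ hK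
    simpa using h1
  -- the endomorphism `r` of `K` factors through `b`
  obtain ⟨y, hy⟩ : ∃ y : B⟦(1 : ℤ)⟧ ⟶ K, r • 𝟙 K = b ≫ y := Triangle.yoneda_exact₃ _ hK (r • 𝟙 K) (by
    change a ≫ (r • 𝟙 K) = 0
    simpa using ha)
  have hyj : y ≫ j = 0 := by
    have h1 : b ≫ (y ≫ j) = 0 := by
      rw [← Category.assoc, ← hy, Linear.smul_comp, Category.id_comp]
      exact killA1 _
    obtain ⟨v, hv⟩ : ∃ v : B⟦(1 : ℤ)⟧ ⟶ A⟦(1 : ℤ)⟧, y ≫ j = (-(r • 𝟙 B)⟦(1 : ℤ)⟧') ≫ v :=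
      Triangle.yoneda_exact₃ _ (rot_of_distTriang _ hK) (y ≫ j) h1
    rw [hv]
    simpa [Functor.map_smul] using killA1 v
  obtain ⟨θ, hθ⟩ : ∃ θ : B⟦(1 : ℤ)⟧ ⟶ D, y = θ ≫ i := Triangle.coyoneda_exact₂ _ hO y hyj
  have hi : (r • 𝟙 D - q ≫ θ) ≫ i = 0 := by
    rw [Preadditive.sub_comp, Category.assoc, ← hθ, ← c2, Category.assoc, ← hy]
    simp
  obtain ⟨ω, k, hω⟩ : ∃ (ω : D ⟶ (A⟦(1 : ℤ)⟧)⟦(-1 : ℤ)⟧) (k : (A⟦(1 : ℤ)⟧)⟦(-1 : ℤ)⟧ ⟶ D),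
      r • 𝟙 D - q ≫ θ = ω ≫ k := by
    obtain ⟨ω, hω⟩ := Triangle.coyoneda_exact₂ _ (inv_rot_of_distTriang _ hO) _ hi
    exact ⟨ω, _, hω⟩
  have hrω : r • ω = 0 := by
    rw [← Category.comp_id ω, ← Linear.comp_smul]
    rw [hA2, comp_zero]
  refine ⟨B, D, s, p, q, hB, ?_, hD⟩
  change (r * r) • 𝟙 D = 0
  rw [sub_eq_iff_eq_add] at hω
  rw [mul_smul, hω, smul_add, ← Linear.smul_comp, ← Linear.smul_comp, hq, hrω, zero_comp, zero_comp,
    add_zero]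
end

section
/- Let T be an R-linear triangulated category, C a full subcategory, and r ∈ R. Then C * T_r ⊆ T_{r²} * C. -/
open CategoryTheory Limits Pretriangulated

universe v u

variable (C : Type u) [Category.{v} C] [Preadditive C] [HasZeroObject C]
  [HasShift C ℤ] [∀ n : ℤ, (shiftFunctor C n).Additive] [Pretriangulated C]

variable [HasBinaryBiproducts C]

/-- in an `R`-linear triangulated category, `C * T_r ⊆ T_{r²} * C`
for any isomorphism-closed full subcategory `C`. -/
theorem star_Tkill_subset [IsTriangulated C] (R : Type*) [CommRing R] [Linear R C]
    [∀ n : ℤ, Functor.Linear R (shiftFunctor C n)]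
    (S : Set C) (hS : ∀ ⦃X Y : C⦄, (X ≅ Y) → X ∈ S → Y ∈ S) (r : R) :
    starOp C S (Tkill C R r) ⊆ starOp C (Tkill C R (r * r)) S := by
  rintro E ⟨A, B, f, g, h, hA, hB, hT⟩
  have shiftKill : ∀ (X : C) (n : ℤ) (a : R), a • 𝟙 X = 0 → a • 𝟙 (X⟦n⟧) = 0 := by
    intro X n a ha
    have := congrArg (fun t => (shiftFunctor C n).map t) ha
    simpa [Functor.map_smul] using this
  have fromKill : ∀ {X Y : C} (a : R) (t : X ⟶ Y), a • 𝟙 X = 0 → a • t = 0 := by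
    intro X Y a t ha
    rw [← Category.id_comp t, ← Linear.smul_comp, ha, zero_comp]
  have toKill : ∀ {X Y : C} (a : R) (t : X ⟶ Y), a • 𝟙 Y = 0 → a • t = 0 := by
    intro X Y a t ha
    rw [← Category.comp_id t, ← Linear.comp_smul, ha, comp_zero]
  have hB' : r • 𝟙 B = 0 := hB
  obtain ⟨u, hu⟩ : ∃ u : E ⟶ A, r • 𝟙 A = f ≫ u := by
    refine Triangle.yoneda_exact₂ _ (inv_rot_of_distTriang _ hT) (r • 𝟙 A) ?_
    have key : ∀ t : B⟦(-1 : ℤ)⟧ ⟶ A, t ≫ (r • 𝟙 A) = 0 := by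
      intro t
      rw [Linear.comp_smul, Category.comp_id]
      exact fromKill r _ (shiftKill B (-1) r hB')
    exact key _
  obtain ⟨K, w, i, hK⟩ := distinguished_cocone_triangle u
  obtain ⟨D, p, d, hD⟩ := distinguished_cocone_triangle (r • 𝟙 A)
  let O := Triangulated.someOctahedron hu.symm hT hK hD
  have hO := O.mem
  have hpj : p ≫ O.m₃ = w := O.comm₃
  have hw : r • w = 0 := by
    have h1 : f ≫ u ≫ w = 0 := by
      have : u ≫ w = 0 := comp_distTriang_mor_zero₁₂ _ hK
      rw [this, comp_zero]
    rw [← Category.assoc, ← hu, Linear.smul_comp, Category.id_comp] at h1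
    exact h1
  obtain ⟨m, hm⟩ : ∃ m : K ⟶ D, r • 𝟙 K = m ≫ O.m₃ := by
    refine Triangle.coyoneda_exact₃ _ hO (r • 𝟙 K) ?_
    change (r • 𝟙 K) ≫ (i ≫ g⟦(1 : ℤ)⟧') = 0
    rw [Linear.smul_comp, Category.id_comp]
    exact toKill r _ (shiftKill B 1 r hB')
  obtain ⟨y, hy⟩ : ∃ y : D ⟶ A, r • 𝟙 D = y ≫ p := by
    refine Triangle.coyoneda_exact₃ _ hD (r • 𝟙 D) ?_
    change (r • 𝟙 D) ≫ d = 0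
    rw [Linear.smul_comp, Category.id_comp]
    have h1 : d ≫ (r • 𝟙 A)⟦(1 : ℤ)⟧' = 0 := comp_distTriang_mor_zero₃₁ _ hD
    simpa [Functor.map_smul] using h1
  have h1 : O.m₁ ≫ y = 0 := by
    obtain ⟨c, hc⟩ : ∃ c : B ⟶ A, O.m₁ ≫ y = c ≫ (r • 𝟙 A) := by
      refine Triangle.coyoneda_exact₂ _ hD (O.m₁ ≫ y) ?_
      change (O.m₁ ≫ y) ≫ p = 0
      rw [Category.assoc, ← hy, Linear.comp_smul, Category.comp_id]
      exact fromKill r _ hB'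
    rw [hc, Linear.comp_smul, Category.comp_id]
    exact fromKill r _ hB'
  obtain ⟨y₁, hy₁⟩ : ∃ y₁ : K ⟶ A, y = O.m₃ ≫ y₁ :=
    Triangle.yoneda_exact₂ _ hO y h1
  have hKK : (r * r) • 𝟙 K = 0 := by
    have e1 : (r * r) • 𝟙 K = m ≫ (r • 𝟙 D) ≫ O.m₃ := by
      rw [mul_smul, hm, Linear.smul_comp, Category.id_comp, Linear.comp_smul]
    rw [e1, hy, Category.assoc, hpj, hy₁, Category.assoc, ← Category.assoc, ← hm,
      Linear.smul_comp, Category.id_comp, ← Linear.comp_smul, hw, comp_zero]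
  exact ⟨_, _, _, _, _, shiftKill K (-1) _ hKK, hA, inv_rot_of_distTriang _ hK⟩
end
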